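/- arXiv:2212.00699 — 4 statements merged into one kernel-verified Lean document; each statement's English description precedes it below -/
import Mathlib

section
/- Let G = (N, 𝒳, 𝒰) be a finite game and 𝒪 = O_1 × ⋯ × O_n a rectangular strategy profile region such that G is equitable with respect to 𝒪. If a payment promise 𝒱 implements 𝒪 (not necessarily exactly) and δ = max over o ∈ 𝒪 of Σ_{i∈N} V_i(o), then there exists a payment promise 𝒱* that implements 𝒪 exactly and satisfies cost(𝒱*) = δ. -/
/-- In a game with player set `ι` and strategy sets `S i`, strategy `x` of player `i`
(weakly) dominates strategy `y`: `x` is at least as good against every profile of the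
other players' strategies and strictly better against at least one. -/
def Dominates {ι : Type*} [DecidableEq ι] {S : ι → Type*}
    (U : ι → (∀ j, S j) → ℝ) (i : ι) (x y : S i) : Prop :=
  (∀ σ : ∀ j, S j, U i (Function.update σ i y) ≤ U i (Function.update σ i x)) ∧
  (∃ σ : ∀ j, S j, U i (Function.update σ i y) < U i (Function.update σ i x))

/-- A strategy of player `i` is undominated if no strategy of player `i` dominates it. -/
def Undominated {ι : Type*} [DecidableEq ι] {S : ι → Type*}
    (U : ι → (∀ j, S j) → ℝ) (i : ι) (x : S i) : Prop :=
  ¬ ∃ y : S i, Dominates U i y x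

/-- The set `𝒳⋆` of strategy profiles consisting entirely of undominated strategies. -/
def UndomProfiles {ι : Type*} [DecidableEq ι] {S : ι → Type*}
    (U : ι → (∀ j, S j) → ℝ) : Set (∀ j, S j) :=
  {σ | ∀ i, Undominated U i (σ i)}

/-- The cost of a payment promise `V` for the game with utilities `U`:
the maximum, over undominated profiles of the modified game `G[V]`,
of the total payment. -/
noncomputable def gameCost {ι : Type*} [DecidableEq ι] [Fintype ι] {S : ι → Type*}
    (U V : ι → (∀ j, S j) → ℝ) : ℝ :=
  sSup ((fun σ => ∑ i, V i σ) '' UndomProfiles (fun i σ => U i σ + V i σ))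

/-- The rectangular strategy-profile region `O_1 × ⋯ × O_n`. -/
def rectSet {ι : Type*} {S : ι → Type*} (O : ∀ i, Set (S i)) : Set (∀ j, S j) :=
  {σ | ∀ i, σ i ∈ O i}

/-- The game is equitable w.r.t. the rectangular region `O`: for each player `i`,
`|O_i| ≤ |𝒳₋ᵢ \ 𝒪₋ᵢ|`. -/
def Equitable {ι : Type*} {S : ι → Type*} (O : ∀ i, Set (S i)) : Prop :=
  ∀ i : ι, (O i).ncard ≤
    Set.ncard {σ : (j : {j : ι // j ≠ i}) → S j.1 | ∃ j, σ j ∉ O j.1}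

/-- The worst-case payment over the region `O`: `max_{o ∈ 𝒪} Σ_i V_i(o)`. -/
noncomputable def maxPay {ι : Type*} [Fintype ι] {S : ι → Type*}
    (V : ι → (∀ j, S j) → ℝ) (O : ∀ i, Set (S i)) : ℝ :=
  sSup ((fun o => ∑ i, V i o) '' rectSet O)

/-!
Let `A = U + V` be the utilities of `G[V]`. Domination of strategies is the strict pointwise order
of their payoff vectors, so in a finite game every strategy lies weakly below an undominated one,
and the latter belongs to `O` because `V` implements `O`.

Choose `M` above all values of `A`. Whenever player `i` plays in `O i` while some opponent leaves
`O`, raise the utility of `i` to `M`, or to `M + 1` if the opponents play the profile `c i (σ i)`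
reserved for the strategy `σ i`. Equitability is what allows distinct strategies in `O i` to get
distinct reserved profiles. Each `x ∈ O i` is then the unique best response to `c i x`, hence
undominated. A strategy `x ∉ O i` lies weakly below some `y ∈ O i` with respect to `A`, and the
raise makes `y` dominate `x`. Utilities on `O` itself, and hence the cost, are unchanged.
-/

section Domination

variable {ι : Type*} [DecidableEq ι] {S : ι → Type*} {A : ι → (∀ j, S j) → ℝ} {i : ι} {x y : S i}

/-- The payoff vector of the strategy `x` of player `i`. It is indexed by full profiles, whose own
component of player `i` is overwritten by `x`, in accordance with the encoding in `Dominates`. -/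
def payoff (A : ι → (∀ j, S j) → ℝ) (i : ι) (x : S i) (σ : ∀ j, S j) : ℝ :=
  A i (Function.update σ i x)

theorem dominates_iff_payoff_lt : Dominates A i x y ↔ payoff A i y < payoff A i x :=
  Pi.lt_def.symm

theorem exists_undominated_payoff_le [Finite (S i)] (A : ι → (∀ j, S j) → ℝ) (x : S i) :
    ∃ y, Undominated A i y ∧ payoff A i x ≤ payoff A i y := by
  obtain ⟨_, hxy, hmax⟩ :=
    (Set.finite_range (payoff A i)).exists_le_maximal (Set.mem_range_self x)
  obtain ⟨y, rfl⟩ := hmax.prop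
  exact ⟨y, fun ⟨z, hz⟩ =>
    hmax.not_gt (Set.mem_range_self z) (dominates_iff_payoff_lt.mp hz), hxy⟩

theorem undominated_of_forall_payoff_lt {σ : ∀ j, S j}
    (h : ∀ y, y ≠ x → payoff A i y σ < payoff A i x σ) : Undominated A i x := by
  rintro ⟨y, hy⟩
  have hlt := dominates_iff_payoff_lt.mp hy
  have hne : y ≠ x := by
    rintro rfl
    exact hlt.false
  exact (hlt.le σ).not_gt (h y hne)

theorem Undominated.mem_of_undomProfiles_subset [∀ j, Finite (S j)] [∀ j, Nonempty (S j)]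
    {O : ∀ j, Set (S j)} (hx : Undominated A i x) (hO : UndomProfiles A ⊆ rectSet O) : x ∈ O i := by
  choose y hy _ using fun j => exists_undominated_payoff_le A (Classical.arbitrary (S j))
  have hmem : Function.update y i x ∈ UndomProfiles A :=
    (Function.forall_update_iff y fun j z => Undominated A j z).mpr ⟨hx, fun j _ => hy j⟩
  simpa only [Function.update_self] using hO hmem i

theorem gameCost_eq_maxPay [Fintype ι] {U V W : ι → (∀ j, S j) → ℝ} {O : ∀ j, Set (S j)}
    (hexact : UndomProfiles (fun i σ => U i σ + W i σ) = rectSet O)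
    (hWV : ∀ i, Set.EqOn (W i) (V i) (rectSet O)) : gameCost U W = maxPay V O := by
  rw [gameCost, maxPay, hexact]
  exact congrArg sSup (Set.image_congr fun σ hσ => Finset.sum_congr rfl fun i _ => hWV i hσ)

end Domination

section Opponents

variable {ι : Type*} {S : ι → Type*}

/-- The opponents' part `σ₋ᵢ` of the profile `σ`. -/
def opponents (i : ι) (σ : ∀ j, S j) : ∀ j : {j // j ≠ i}, S j :=
  Subtype.restrict (· ≠ i) σ

/-- The set `𝒳₋ᵢ \ 𝒪₋ᵢ` of opponents' profiles in which somebody leaves the region. -/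
def leavingProfiles (O : ∀ i, Set (S i)) (i : ι) : Set (∀ j : {j // j ≠ i}, S j) :=
  {τ | ∃ j : {j // j ≠ i}, τ j ∉ O j}

theorem opponents_update [DecidableEq ι] (i : ι) (σ : ∀ j, S j) (x : S i) :
    opponents i (Function.update σ i x) = opponents i σ :=
  funext fun j => Function.update_of_ne j.2 x σ

theorem opponents_surjective [∀ j, Nonempty (S j)] (i : ι) :
    Function.Surjective (opponents i : (∀ j, S j) → ∀ j : {j // j ≠ i}, S j) :=
  Subtype.surjective_restrict (· ≠ i)

theorem opponents_notMem_leavingProfiles {O : ∀ j, Set (S j)} {σ : ∀ j, S j} (hσ : σ ∈ rectSet O)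
    (i : ι) : opponents i σ ∉ leavingProfiles O i :=
  fun ⟨j, hj⟩ => hj (hσ j)

theorem Equitable.exists_mapsTo_injOn [∀ j, Nonempty (S j)] {O : ∀ j, Set (S j)}
    (hO : Equitable O) (i : ι) [Finite (S i)] :
    ∃ c : S i → ∀ j : {j // j ≠ i}, S j,
      Set.MapsTo c (O i) (leavingProfiles O i) ∧ Set.InjOn c (O i) := by
  have hfin : (O i).Finite := Set.toFinite _
  have hcard : (O i).encard ≤ (leavingProfiles O i).encard :=
    calc (O i).encard = (O i).ncard := hfin.cast_ncard_eq.symm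
      _ ≤ (leavingProfiles O i).ncard := Nat.cast_le.mpr (hO i)
      _ ≤ (leavingProfiles O i).encard := Set.ncard_le_encard _
  exact hfin.exists_injOn_of_encard_le hcard

end Opponents

section ToppedUp

variable {ι : Type*} {S : ι → Type*} {A : ι → (∀ j, S j) → ℝ} {O : ∀ j, Set (S j)}
  {c : ∀ i, S i → ∀ j : {j // j ≠ i}, S j} {M : ℝ} {i : ι} {x y : S i} {σ : ∀ j, S j}

open Classical in
/-- The utilities of the modified game: starting from `A`, a player who plays in `O` while some
opponent leaves `O` gets `M` instead, or `M + 1` if the opponents play the profile that `c` reserves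
for the player's own strategy. -/
noncomputable def toppedUp (A : ι → (∀ j, S j) → ℝ) (O : ∀ j, Set (S j))
    (c : ∀ i, S i → ∀ j : {j // j ≠ i}, S j) (M : ℝ) (i : ι) (σ : ∀ j, S j) : ℝ :=
  if σ i ∈ O i ∧ opponents i σ ∈ leavingProfiles O i then
    if opponents i σ = c i (σ i) then M + 1 else M
  else A i σ

theorem toppedUp_of_mem_rectSet (hσ : σ ∈ rectSet O) : toppedUp A O c M i σ = A i σ :=
  if_neg fun h => opponents_notMem_leavingProfiles hσ i h.2

theorem le_toppedUp (hM : A i σ ≤ M) : A i σ ≤ toppedUp A O c M i σ := by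
  unfold toppedUp
  split_ifs <;> linarith

variable [DecidableEq ι]

theorem payoff_toppedUp_of_notMem (hx : x ∉ O i) :
    payoff (toppedUp A O c M) i x σ = payoff A i x σ := by
  simp [payoff, toppedUp, hx]

theorem payoff_toppedUp_of_opponents_notMem (hσ : opponents i σ ∉ leavingProfiles O i) :
    payoff (toppedUp A O c M) i x σ = payoff A i x σ := by
  simp [payoff, toppedUp, opponents_update, hσ]

theorem payoff_toppedUp_of_opponents_eq (hx : x ∈ O i) (hσ : opponents i σ ∈ leavingProfiles O i)
    (hc : opponents i σ = c i x) : payoff (toppedUp A O c M) i x σ = M + 1 := by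
  simp [payoff, toppedUp, opponents_update, hx, hσ, ← hc]

theorem payoff_toppedUp_of_opponents_ne (hx : x ∈ O i) (hσ : opponents i σ ∈ leavingProfiles O i)
    (hc : opponents i σ ≠ c i x) : payoff (toppedUp A O c M) i x σ = M := by
  simp [payoff, toppedUp, opponents_update, hx, hσ, hc]

theorem le_payoff_toppedUp (hx : x ∈ O i) (hσ : opponents i σ ∈ leavingProfiles O i) :
    M ≤ payoff (toppedUp A O c M) i x σ := by
  by_cases hc : opponents i σ = c i x
  · linarith [payoff_toppedUp_of_opponents_eq (A := A) (M := M) hx hσ hc]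
  · exact (payoff_toppedUp_of_opponents_ne hx hσ hc).ge

theorem undominated_toppedUp_of_mem [∀ j, Nonempty (S j)] (hM : ∀ σ, A i σ ≤ M)
    (hmaps : Set.MapsTo (c i) (O i) (leavingProfiles O i)) (hinj : Set.InjOn (c i) (O i))
    (hx : x ∈ O i) : Undominated (toppedUp A O c M) i x := by
  obtain ⟨σ, hσ⟩ := opponents_surjective i (c i x)
  have hleave : opponents i σ ∈ leavingProfiles O i := hσ ▸ hmaps hx
  refine undominated_of_forall_payoff_lt (σ := σ) fun y hyx => ?_
  rw [payoff_toppedUp_of_opponents_eq hx hleave hσ]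
  by_cases hy : y ∈ O i
  · have hne : opponents i σ ≠ c i y := fun h => hyx (hinj hy hx (h.symm.trans hσ))
    rw [payoff_toppedUp_of_opponents_ne hy hleave hne]
    exact lt_add_one M
  · rw [payoff_toppedUp_of_notMem hy]
    exact (hM _).trans_lt (lt_add_one M)

theorem dominates_toppedUp [∀ j, Nonempty (S j)] (hM : ∀ σ, A i σ < M)
    (hO : (leavingProfiles O i).Nonempty) (hx : x ∉ O i) (hy : y ∈ O i)
    (hxy : payoff A i x ≤ payoff A i y) : Dominates (toppedUp A O c M) i y x := by
  have hlt : ∀ σ, opponents i σ ∈ leavingProfiles O i →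
      payoff (toppedUp A O c M) i x σ < payoff (toppedUp A O c M) i y σ := fun σ hσ =>
    calc payoff (toppedUp A O c M) i x σ = payoff A i x σ := payoff_toppedUp_of_notMem hx
      _ < M := hM _
      _ ≤ payoff (toppedUp A O c M) i y σ := le_payoff_toppedUp hy hσ
  refine dominates_iff_payoff_lt.mpr (Pi.lt_def.mpr ⟨fun σ => ?_, ?_⟩)
  · by_cases hσ : opponents i σ ∈ leavingProfiles O i
    · exact (hlt σ hσ).le
    · rw [payoff_toppedUp_of_opponents_notMem hσ, payoff_toppedUp_of_opponents_notMem hσ]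
      exact hxy σ
  · obtain ⟨τ, hτ⟩ := hO
    obtain ⟨σ, rfl⟩ := opponents_surjective i τ
    exact ⟨σ, hlt σ hτ⟩

theorem undomProfiles_toppedUp [∀ j, Finite (S j)] [∀ j, Nonempty (S j)]
    (hA : UndomProfiles A ⊆ rectSet O) (hM : ∀ i σ, A i σ < M)
    (hmaps : ∀ i, Set.MapsTo (c i) (O i) (leavingProfiles O i))
    (hinj : ∀ i, Set.InjOn (c i) (O i)) : UndomProfiles (toppedUp A O c M) = rectSet O := by
  have hmem : ∀ i x, Undominated (toppedUp A O c M) i x ↔ x ∈ O i := by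
    refine fun i x => ⟨fun hx => ?_,
      undominated_toppedUp_of_mem (fun σ => (hM i σ).le) (hmaps i) (hinj i)⟩
    by_contra hxO
    obtain ⟨y, hy, hxy⟩ := exists_undominated_payoff_le A x
    have hyO : y ∈ O i := hy.mem_of_undomProfiles_subset hA
    exact hx ⟨y, dominates_toppedUp (hM i) ⟨c i y, hmaps i hyO⟩ hxO hyO hxy⟩
  exact Set.ext fun σ => forall_congr' fun i => hmem i (σ i)

end ToppedUp

/-- in an equitable game, any (not necessarily exact) implementation `V` of
the rectangular region `O` can be turned into an exact implementation `W` whose cost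
equals `δ = max_{o ∈ 𝒪} Σ_i V_i(o)`. -/
theorem exists_exact_implementation {ι : Type*} [DecidableEq ι] [Fintype ι]
    {S : ι → Type*} [∀ i, Fintype (S i)] [∀ i, Nonempty (S i)]
    (U : ι → (∀ j, S j) → ℝ) (O : ∀ i, Set (S i))
    (heq : Equitable O)
    (V : ι → (∀ j, S j) → ℝ) (hV : ∀ i σ, 0 ≤ V i σ)
    (himpl : UndomProfiles (fun i σ => U i σ + V i σ) ⊆ rectSet O) :
    ∃ W : ι → (∀ j, S j) → ℝ,
      (∀ i σ, 0 ≤ W i σ) ∧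
      UndomProfiles (fun i σ => U i σ + W i σ) = rectSet O ∧
      gameCost U W = maxPay V O := by
  let A : ι → (∀ j, S j) → ℝ := fun i σ => U i σ + V i σ
  obtain ⟨B, hB⟩ := Finite.exists_le fun p : ι × (∀ j, S j) => A p.1 p.2
  have hM : ∀ i σ, A i σ < B + 1 := fun i σ => (hB (i, σ)).trans_lt (lt_add_one B)
  choose c hmaps hinj using fun i => heq.exists_mapsTo_injOn i
  let W : ι → (∀ j, S j) → ℝ := fun i σ => toppedUp A O c (B + 1) i σ - U i σ
  have hUW : (fun i σ => U i σ + W i σ) = toppedUp A O c (B + 1) :=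
    funext₂ fun i σ => add_sub_cancel (U i σ) _
  have hexact : UndomProfiles (fun i σ => U i σ + W i σ) = rectSet O :=
    hUW ▸ undomProfiles_toppedUp himpl hM hmaps hinj
  have hVW : ∀ i σ, V i σ ≤ W i σ := fun i σ =>
    have hle : A i σ ≤ toppedUp A O c (B + 1) i σ := le_toppedUp (hM i σ).le
    le_sub_iff_add_le'.mpr hle
  have hWV : ∀ i, Set.EqOn (W i) (V i) (rectSet O) := fun i σ hσ =>
    sub_eq_of_eq_add' (toppedUp_of_mem_rectSet hσ)
  exact ⟨W, fun i σ => (hV i σ).trans (hVW i σ), hexact, gameCost_eq_maxPay hexact hWV⟩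
end

section
/- Consider the two-player game G constructed from an Exact Cover by 3-Sets instance (n̂, 𝒜, 𝒞) as described, with desired sets O_1 = O_2 = {c_j^{a_i} : C_j ∈ 𝒞, a_i ∈ C_j}. If (n̂, 𝒜, 𝒞) admits an exact cover, then there exists a payment promise 𝒱 such that 𝒳⋆_{G[𝒱]} ⊆ O_1 × O_2 and cost(𝒱) = 0. -/
/-- `S` is an exact cover of the X3C instance with `3 * nh` elements (indexed by
`ZMod m`, `m = 3 * nh`) and sets `C`: `|S| = nh` and every element is covered. -/
def IsExactCover (m nh : ℕ) (C : ZMod m → Finset (ZMod m)) (S : Set (ZMod m)) : Prop :=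
  S.ncard = nh ∧ ∀ a : ZMod m, ∃ j ∈ S, a ∈ C j

/-- The common strategy set of the two players: an element strategy `a_i` (left) or a
strategy `c_j^{a_i}` for a set `C_j` and an element `a_i ∈ C_j` (right). -/
def X3CStrat (m : ℕ) (C : ZMod m → Finset (ZMod m)) : Type :=
  ZMod m ⊕ {p : ZMod m × ZMod m // p.2 ∈ C p.1}

/-- Utility of player 1 (first argument is player 1's strategy):
`U_1(a_i, c_j^{a_i}) = 2` and `U_1(a_i, c_j^{a_m}) = 1` for `a_m ∈ C_j ∖ {a_i}`
(whenever `a_i ∈ C_j`), `U_1(c_j^{a_i}, c_j^{a_i}) = 2` and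
`U_1(c_j^{a_i}, c_j^{a_m}) = 1` for `a_m ∈ C_j ∖ {a_i}`; all other values are 0. -/
def xU1 (m : ℕ) (C : ZMod m → Finset (ZMod m)) :
    X3CStrat m C → X3CStrat m C → ℝ
  | Sum.inl a, Sum.inr p => if a ∈ C p.1.1 then (if p.1.2 = a then 2 else 1) else 0
  | Sum.inr q, Sum.inr p =>
      if p.1.1 = q.1.1 then (if p.1.2 = q.1.2 then 2 else 1) else 0
  | _, _ => 0

/-- Utility of player 2 (first argument is player 1's strategy):
`U_2(c_p^{a_{i-1}}, a_i) = 1` and `U_2(c_p^{a_{i-1}}, c_j^{a_i}) = 1`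
(indices mod `3 nh`); all other values are 0. -/
def xU2 (m : ℕ) (C : ZMod m → Finset (ZMod m)) :
    X3CStrat m C → X3CStrat m C → ℝ
  | Sum.inr q, Sum.inl a => if q.1.2 = a - 1 then 1 else 0
  | Sum.inr q, Sum.inr p => if q.1.2 = p.1.2 - 1 then 1 else 0
  | _, _ => 0

/-- The two-player game built from the X3C instance. -/
def xGame (m : ℕ) (C : ZMod m → Finset (ZMod m)) :
    Fin 2 → (Fin 2 → X3CStrat m C) → ℝ :=
  fun i σ => if i = 0 then xU1 m C (σ 0) (σ 1) else xU2 m C (σ 0) (σ 1)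

/-- The desired strategy set `O_1 = O_2 = {c_j^{a_i} : C_j ∈ 𝒞, a_i ∈ C_j}`. -/
def xDesired (m : ℕ) (C : ZMod m → Finset (ZMod m)) : Set (X3CStrat m C) :=
  Set.range Sum.inr

/-!
Given an exact cover `S`, call `c_j^a` with `j ∈ S` a covering strategy. Both players are promised
`3` for a covering strategy, due only if the opponent does not play one; hence nothing is paid when
both do. Since all utilities lie in `[0, 2]`, this makes a covering strategy strictly better than
any other against a non-covering opponent. Against a covering opponent nothing is paid, but there
the covering strategy of `a` is already at least as good as `a` and every `c_p^a`: for player 2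
because `U_2` depends on `a` only, for player 1 because `C_j` is the only set of `S` containing
`a`. So non-covering strategies are dominated. Distinct covering strategies do not dominate each
other: among them, only `c_j^a` itself earns player 1 the utility `2` against `c_j^a`, and only the
one of `a` earns player 2 a positive utility against a strategy `c_p^{a-1}`.
-/

lemma not_dominates_self {ι : Type*} [DecidableEq ι] {S : ι → Type*} {U : ι → (∀ j, S j) → ℝ}
    {i : ι} (x : S i) : ¬ Dominates U i x x :=
  fun ⟨_, _, h⟩ => h.false

section LoyaltyPayment

variable {ι : Type*} {S : ι → Type*} {K : ∀ i, Set (S i)} {M : ℝ} {i : ι}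

open Classical in
/-- The payment promise rewarding loyalty to `K`: player `i` receives `M` for a strategy in `K i`
whenever some other player `j` plays outside `K j`. As `i` itself is loyal, the latter just says
that the profile is outside `rectSet K`. -/
noncomputable def loyaltyPayment (K : ∀ i, Set (S i)) (M : ℝ) (i : ι) (σ : ∀ j, S j) : ℝ :=
  if σ i ∈ K i ∧ σ ∉ rectSet K then M else 0

lemma loyaltyPayment_nonneg (hM : 0 ≤ M) (i : ι) (σ : ∀ j, S j) : 0 ≤ loyaltyPayment K M i σ := by
  rw [loyaltyPayment]
  split_ifs
  exacts [hM, le_rfl]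

lemma loyaltyPayment_of_notMem {σ : ∀ j, S j} (hσ : σ i ∉ K i) : loyaltyPayment K M i σ = 0 :=
  if_neg fun h => hσ h.1

lemma loyaltyPayment_of_mem_rectSet {σ : ∀ j, S j} (hσ : σ ∈ rectSet K) :
    loyaltyPayment K M i σ = 0 :=
  if_neg fun h => h.2 hσ

lemma loyaltyPayment_of_notMem_rectSet {σ : ∀ j, S j} (hi : σ i ∈ K i) (hσ : σ ∉ rectSet K) :
    loyaltyPayment K M i σ = M :=
  if_pos ⟨hi, hσ⟩

variable [DecidableEq ι] {U : ι → (∀ j, S j) → ℝ} {x y : S i}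

lemma update_mem_rectSet_iff {σ : ∀ j, S j} :
    Function.update σ i x ∈ rectSet K ↔ x ∈ K i ∧ ∀ j, j ≠ i → σ j ∈ K j :=
  Function.forall_update_iff σ fun j s => s ∈ K j

lemma update_notMem_rectSet {σ : ∀ j, S j} (hσ : σ ∉ rectSet K) (hi : σ i ∈ K i) :
    Function.update σ i x ∉ rectSet K := by
  contrapose hσ
  rw [← Function.update_eq_self i σ]
  exact update_mem_rectSet_iff.2 ⟨hi, (update_mem_rectSet_iff.1 hσ).2⟩

lemma loyaltyPayment_update_congr (hx : x ∈ K i) (hy : y ∈ K i) (σ : ∀ j, S j) :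
    loyaltyPayment K M i (Function.update σ i x) =
      loyaltyPayment K M i (Function.update σ i y) := by
  classical
  refine if_congr ?_ rfl rfl
  simp only [Function.update_self, update_mem_rectSet_iff, hx, hy]

lemma dominates_add_loyaltyPayment_iff (hx : x ∈ K i) (hy : y ∈ K i) :
    Dominates (fun i σ => U i σ + loyaltyPayment K M i σ) i x y ↔ Dominates U i x y := by
  simp only [Dominates, loyaltyPayment_update_congr hx hy, add_le_add_iff_right,
    add_lt_add_iff_right]

lemma add_loyaltyPayment_update_lt (hM : ∀ σ τ, U i σ < U i τ + M) (hx : x ∈ K i)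
    (hy : y ∉ K i) {σ : ∀ j, S j} (hσ : Function.update σ i x ∉ rectSet K) :
    U i (Function.update σ i y) + loyaltyPayment K M i (Function.update σ i y) <
      U i (Function.update σ i x) + loyaltyPayment K M i (Function.update σ i x) := by
  rw [loyaltyPayment_of_notMem (by rwa [Function.update_self]), add_zero,
    loyaltyPayment_of_notMem_rectSet (by rwa [Function.update_self]) hσ]
  exact hM _ _

lemma dominates_add_loyaltyPayment (hM : ∀ σ τ, U i σ < U i τ + M)
    (hout : ∃ σ ∉ rectSet K, σ i ∈ K i) (hx : x ∈ K i) (hy : y ∉ K i)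
    (hle : ∀ σ ∈ rectSet K, U i (Function.update σ i y) ≤ U i (Function.update σ i x)) :
    Dominates (fun i σ => U i σ + loyaltyPayment K M i σ) i x y := by
  refine ⟨fun σ => ?_, ?_⟩
  · by_cases hσ : Function.update σ i x ∈ rectSet K
    · have hpay : loyaltyPayment K M i (Function.update σ i y) = 0 :=
        loyaltyPayment_of_notMem (by rwa [Function.update_self])
      simpa [hpay, loyaltyPayment_of_mem_rectSet hσ] using hle _ hσ
    · exact (add_loyaltyPayment_update_lt hM hx hy hσ).le
  · obtain ⟨σ, hσ, hi⟩ := hout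
    exact ⟨σ, add_loyaltyPayment_update_lt hM hx hy (update_notMem_rectSet hσ hi)⟩

lemma not_dominates_add_loyaltyPayment (hM : ∀ σ τ, U i σ < U i τ + M)
    (hout : ∃ σ ∉ rectSet K, σ i ∈ K i) (hx : x ∈ K i) (hy : y ∉ K i) :
    ¬ Dominates (fun i σ => U i σ + loyaltyPayment K M i σ) i y x := by
  obtain ⟨σ, hσ, hi⟩ := hout
  exact fun hdom =>
    (add_loyaltyPayment_update_lt hM hx hy (update_notMem_rectSet hσ hi)).not_ge (hdom.1 σ)

theorem undominated_add_loyaltyPayment_iff (hM : ∀ σ τ, U i σ < U i τ + M)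
    (hout : ∃ σ ∉ rectSet K, σ i ∈ K i)
    (hbetter : ∀ y ∉ K i, ∃ x ∈ K i, ∀ σ ∈ rectSet K,
      U i (Function.update σ i y) ≤ U i (Function.update σ i x))
    (hundom : ∀ x ∈ K i, ∀ y ∈ K i, ¬ Dominates U i y x) :
    Undominated (fun i σ => U i σ + loyaltyPayment K M i σ) i x ↔ x ∈ K i := by
  refine ⟨fun h => ?_, fun hx => ?_⟩
  · by_contra hx
    obtain ⟨z, hz, hle⟩ := hbetter x hx
    exact h ⟨z, dominates_add_loyaltyPayment hM hout hz hx hle⟩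
  · rintro ⟨y, hdom⟩
    by_cases hy : y ∈ K i
    · exact hundom x hx y hy ((dominates_add_loyaltyPayment_iff hy hx).1 hdom)
    · exact not_dominates_add_loyaltyPayment hM hout hx hy hdom

lemma gameCost_loyaltyPayment [Fintype ι] (hne : (rectSet K).Nonempty)
    (h : UndomProfiles (fun i σ => U i σ + loyaltyPayment K M i σ) = rectSet K) :
    gameCost U (loyaltyPayment K M) = 0 := by
  have hsum : ∀ σ ∈ rectSet K, ∑ i, loyaltyPayment K M i σ = 0 := fun σ hσ =>
    Finset.sum_eq_zero fun i _ => loyaltyPayment_of_mem_rectSet hσ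
  rw [gameCost, h, Set.image_congr hsum, hne.image_const, csSup_singleton]

end LoyaltyPayment

open Finset in
/-- Double counting: the numbers of sets containing each element are all positive and have average
at most one. -/
theorem existsUnique_mem_of_sum_card_le {ι α : Type*} [Fintype α] {s : Finset ι}
    {f : ι → Finset α} (hcover : ∀ a, ∃ i ∈ s, a ∈ f i)
    (hcard : ∑ i ∈ s, #(f i) ≤ Fintype.card α) (a : α) : ∃! i, i ∈ s ∧ a ∈ f i := by
  classical
  have hpos : ∀ b ∈ univ, 1 ≤ #{i ∈ s | b ∈ f i} := fun b _ => by
    obtain ⟨i, hi, hb⟩ := hcover b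
    exact card_pos.2 ⟨i, mem_filter.2 ⟨hi, hb⟩⟩
  have hsum : ∑ b, #{i ∈ s | b ∈ f i} = ∑ i ∈ s, #(f i) := by
    simpa [bipartiteAbove, bipartiteBelow] using
      sum_card_bipartiteAbove_eq_sum_card_bipartiteBelow (s := univ) (t := s) fun b i => b ∈ f i
  have hone : #{i ∈ s | a ∈ f i} = 1 := by
    refine ((sum_eq_sum_iff_of_le hpos).1 (le_antisymm (sum_le_sum hpos) ?_) a (mem_univ a)).symm
    simpa [hsum] using hcard
  simpa [card_eq_one_iff_existsUnique] using hone

lemma IsExactCover.existsUnique_mem {m nh : ℕ} [NeZero m] (hm : m = 3 * nh)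
    {C : ZMod m → Finset (ZMod m)} (hC : ∀ j, (C j).card = 3) {S : Set (ZMod m)}
    (hS : IsExactCover m nh C S) (a : ZMod m) : ∃! j, j ∈ S ∧ a ∈ C j := by
  classical
  have hcard : ∑ j ∈ S.toFinset, (C j).card = m := by
    rw [Finset.sum_congr rfl fun j _ => hC j, Finset.sum_const, ← Set.ncard_eq_toFinset_card',
      hS.1, smul_eq_mul, mul_comm, ← hm]
  simpa using existsUnique_mem_of_sum_card_le (s := S.toFinset) (f := C)
    (by simpa using hS.2) (by rw [hcard, ZMod.card]) a

section X3CGame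

variable {m : ℕ} {C : ZMod m → Finset (ZMod m)} {S : Set (ZMod m)}

/-- The element `a` underlying the strategies `a` and `c_j^a`. -/
def X3CStrat.elt : X3CStrat m C → ZMod m
  | Sum.inl a => a
  | Sum.inr p => p.1.2

/-- The covering strategies: the `c_j^a` whose set `C_j` belongs to the subcollection `S`. -/
def coveringStrats (C : ZMod m → Finset (ZMod m)) (S : Set (ZMod m)) : Set (X3CStrat m C) :=
  Set.image Sum.inr {p | p.1.1 ∈ S}

lemma coveringStrats_subset_xDesired : coveringStrats C S ⊆ xDesired m C :=
  Set.image_subset_range _ _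

lemma exists_notMem_coveringStrats : ∃ x : X3CStrat m C, x ∉ coveringStrats C S :=
  ⟨Sum.inl 0, fun ⟨_, _, h⟩ => Sum.inr_ne_inl h⟩

lemma exists_mem_coveringStrats_elt_eq (hS : ∀ a, ∃! j, j ∈ S ∧ a ∈ C j) (a : ZMod m) :
    ∃ x ∈ coveringStrats C S, x.elt = a := by
  obtain ⟨j, ⟨hj, ha⟩, -⟩ := hS a
  exact ⟨Sum.inr ⟨(j, a), ha⟩, ⟨_, hj, rfl⟩, rfl⟩

lemma injOn_elt_coveringStrats (hS : ∀ a, ∃! j, j ∈ S ∧ a ∈ C j) :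
    Set.InjOn X3CStrat.elt (coveringStrats C S) := by
  rintro _ ⟨⟨⟨j, a⟩, ha⟩, hj, rfl⟩ _ ⟨⟨⟨k, b⟩, hb⟩, hk, rfl⟩ (rfl : a = b)
  obtain rfl : j = k := (hS a).unique ⟨hj, ha⟩ ⟨hk, hb⟩
  rfl

lemma xGame_mem_Icc (i : Fin 2) (σ : Fin 2 → X3CStrat m C) : xGame m C i σ ∈ Set.Icc 0 2 := by
  simp only [xGame]
  rcases σ 0 with a | p <;> rcases σ 1 with b | q <;> simp only [xU1, xU2] <;> split_ifs <;>
    norm_num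

lemma xGame_zero_update (σ : Fin 2 → X3CStrat m C) (x : X3CStrat m C) :
    xGame m C 0 (Function.update σ 0 x) = xU1 m C x (σ 1) := by
  simp [xGame]

lemma xGame_one_update (σ : Fin 2 → X3CStrat m C) (y : X3CStrat m C) :
    xGame m C 1 (Function.update σ 1 y) = xU2 m C (σ 0) y := by
  simp [xGame]

lemma xU1_le_xU1_inl_elt (x y : X3CStrat m C) : xU1 m C x y ≤ xU1 m C (Sum.inl x.elt) y := by
  rcases x with a | ⟨⟨j, a⟩, ha⟩
  · exact le_rfl
  rcases y with b | ⟨⟨k, b⟩, hb⟩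
  · exact le_rfl
  by_cases hkj : k = j
  · subst hkj
    exact ((if_pos rfl).trans (if_pos (c := a ∈ C k) ha).symm).le
  · simp only [xU1, hkj, if_false]
    split_ifs <;> norm_num

lemma xU1_inl_elt_of_mem_coveringStrats (hS : ∀ a, ∃! j, j ∈ S ∧ a ∈ C j) {x y : X3CStrat m C}
    (hx : x ∈ coveringStrats C S) (hy : y ∈ coveringStrats C S) :
    xU1 m C (Sum.inl x.elt) y = xU1 m C x y := by
  obtain ⟨⟨⟨j, a⟩, ha⟩, hj, rfl⟩ := hx
  obtain ⟨⟨⟨k, b⟩, hb⟩, hk, rfl⟩ := hy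
  have hiff : a ∈ C k ↔ k = j :=
    ⟨fun hak => (hS a).unique ⟨hk, hak⟩ ⟨hj, ha⟩, fun hkj => hkj ▸ ha⟩
  exact if_congr hiff rfl rfl

lemma xU1_inr_self (p : {p : ZMod m × ZMod m // p.2 ∈ C p.1}) :
    xU1 m C (Sum.inr p) (Sum.inr p) = 2 := by
  simp [xU1]

lemma eq_of_two_le_xU1_inr_inr {p q : {p : ZMod m × ZMod m // p.2 ∈ C p.1}}
    (h : 2 ≤ xU1 m C (Sum.inr p) (Sum.inr q)) : p = q := by
  simp only [xU1] at h
  split_ifs at h with hset helt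
  · exact Subtype.ext (Prod.ext hset.symm helt.symm)
  all_goals norm_num at h

lemma xU2_inr (p : {p : ZMod m × ZMod m // p.2 ∈ C p.1}) (y : X3CStrat m C) :
    xU2 m C (Sum.inr p) y = if p.1.2 = y.elt - 1 then 1 else 0 := by
  rcases y with b | q <;> rfl

lemma xU2_congr {y z : X3CStrat m C} (h : y.elt = z.elt) (x : X3CStrat m C) :
    xU2 m C x y = xU2 m C x z := by
  rcases x with a | p
  · rfl
  · rw [xU2_inr, xU2_inr, h]

lemma exists_mem_coveringStrats_xGame_update_le (hS : ∀ a, ∃! j, j ∈ S ∧ a ∈ C j) (i : Fin 2)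
    (y : X3CStrat m C) : ∃ x ∈ coveringStrats C S, ∀ σ ∈ rectSet fun _ => coveringStrats C S,
      xGame m C i (Function.update σ i y) ≤ xGame m C i (Function.update σ i x) := by
  obtain ⟨x, hx, hxy⟩ := exists_mem_coveringStrats_elt_eq hS y.elt
  refine ⟨x, hx, fun σ hσ => ?_⟩
  fin_cases i
  · calc xGame m C 0 (Function.update σ 0 y)
      _ = xU1 m C y (σ 1) := xGame_zero_update σ y
      _ ≤ xU1 m C (Sum.inl y.elt) (σ 1) := xU1_le_xU1_inl_elt y _
      _ = xU1 m C x (σ 1) := by rw [← hxy, xU1_inl_elt_of_mem_coveringStrats hS hx (hσ 1)]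
      _ = xGame m C 0 (Function.update σ 0 x) := (xGame_zero_update σ x).symm
  · calc xGame m C 1 (Function.update σ 1 y)
      _ = xU2 m C (σ 0) y := xGame_one_update σ y
      _ = xU2 m C (σ 0) x := xU2_congr hxy.symm _
      _ ≤ xGame m C 1 (Function.update σ 1 x) := (xGame_one_update σ x).ge

lemma xU1_le_of_dominates {x y : X3CStrat m C} (h : Dominates (xGame m C) 0 y x)
    (z : X3CStrat m C) : xU1 m C x z ≤ xU1 m C y z := by
  simpa only [xGame_zero_update] using h.1 fun _ => z

lemma xU2_le_of_dominates {x y : X3CStrat m C} (h : Dominates (xGame m C) 1 y x)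
    (z : X3CStrat m C) : xU2 m C z x ≤ xU2 m C z y := by
  simpa only [xGame_one_update] using h.1 fun _ => z

lemma eq_of_dominates_zero {x y : X3CStrat m C} (hx : x ∈ xDesired m C) (hy : y ∈ xDesired m C)
    (h : Dominates (xGame m C) 0 y x) : y = x := by
  obtain ⟨p, rfl⟩ := hx
  obtain ⟨q, rfl⟩ := hy
  have hle := xU1_le_of_dominates h (Sum.inr p)
  rw [xU1_inr_self] at hle
  rw [eq_of_two_le_xU1_inr_inr hle]

lemma elt_eq_of_dominates_one {x y : X3CStrat m C} (hC : ∃ j, x.elt - 1 ∈ C j)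
    (h : Dominates (xGame m C) 1 y x) : y.elt = x.elt := by
  obtain ⟨j, hj⟩ := hC
  have hle := xU2_le_of_dominates h (Sum.inr ⟨(j, x.elt - 1), hj⟩)
  rw [xU2_inr, xU2_inr, if_pos rfl] at hle
  split_ifs at hle with helt
  · exact (sub_left_injective helt).symm
  · norm_num at hle

lemma not_dominates_of_mem_coveringStrats (hS : ∀ a, ∃! j, j ∈ S ∧ a ∈ C j) (i : Fin 2)
    {x y : X3CStrat m C} (hx : x ∈ coveringStrats C S) (hy : y ∈ coveringStrats C S) :
    ¬ Dominates (xGame m C) i y x := by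
  intro h
  suffices hyx : y = x by
    subst hyx
    exact not_dominates_self _ h
  fin_cases i
  · exact eq_of_dominates_zero (coveringStrats_subset_xDesired hx)
      (coveringStrats_subset_xDesired hy) h
  · obtain ⟨j, ⟨-, hj⟩, -⟩ := hS (x.elt - 1)
    exact injOn_elt_coveringStrats hS hy hx (elt_eq_of_dominates_one ⟨j, hj⟩ h)

lemma exists_notMem_rectSet_coveringStrats (hS : ∀ a, ∃! j, j ∈ S ∧ a ∈ C j) (i : Fin 2) :
    ∃ σ ∉ rectSet fun _ : Fin 2 => coveringStrats C S, σ i ∈ coveringStrats C S := by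
  obtain ⟨x, hx, -⟩ := exists_mem_coveringStrats_elt_eq hS 0
  obtain ⟨y, hy⟩ := exists_notMem_coveringStrats (C := C) (S := S)
  refine ⟨Function.update (fun _ => y) i x, fun h => ?_, by rwa [Function.update_self]⟩
  obtain ⟨j, hj⟩ := exists_ne i
  exact hy ((update_mem_rectSet_iff.1 h).2 j hj)

theorem undomProfiles_xGame_add_loyaltyPayment (hS : ∀ a, ∃! j, j ∈ S ∧ a ∈ C j) :
    UndomProfiles (fun i σ => xGame m C i σ + loyaltyPayment (fun _ => coveringStrats C S) 3 i σ) =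
      rectSet fun _ => coveringStrats C S := by
  have hM (i : Fin 2) (σ τ : Fin 2 → X3CStrat m C) : xGame m C i σ < xGame m C i τ + 3 := by
    linarith [(xGame_mem_Icc i σ).2, (xGame_mem_Icc i τ).1]
  ext σ
  exact forall_congr' fun i => undominated_add_loyaltyPayment_iff (hM i)
    (exists_notMem_rectSet_coveringStrats hS i)
    (fun y _ => exists_mem_coveringStrats_xGame_update_le hS i y)
    (fun _ hx _ hy => not_dominates_of_mem_coveringStrats hS i hx hy)

end X3CGame

theorem x3c_game_forward_general (m : ℕ) (C : ZMod m → Finset (ZMod m))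
    (hcover : ∃ S : Set (ZMod m), ∀ a, ∃! j, j ∈ S ∧ a ∈ C j) :
    ∃ V : Fin 2 → (Fin 2 → X3CStrat m C) → ℝ,
      (∀ i σ, 0 ≤ V i σ) ∧
      UndomProfiles (fun i σ => xGame m C i σ + V i σ) ⊆
        rectSet (fun _ : Fin 2 => xDesired m C) ∧
      gameCost (xGame m C) V = 0 := by
  obtain ⟨S, hS⟩ := hcover
  have hundom := undomProfiles_xGame_add_loyaltyPayment hS
  obtain ⟨x, hx, -⟩ := exists_mem_coveringStrats_elt_eq hS 0
  refine ⟨loyaltyPayment (fun _ => coveringStrats C S) 3, loyaltyPayment_nonneg zero_le_three, ?_,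
    gameCost_loyaltyPayment ⟨fun _ => x, fun _ => hx⟩ hundom⟩
  rw [hundom]
  exact fun σ hσ i => coveringStrats_subset_xDesired (hσ i)

/-- if the X3C instance admits an exact cover, then the constructed
two-player game has a payment promise implementing `O_1 × O_2` at cost 0. -/
theorem x3c_game_forward (m nh : ℕ) [NeZero m] (hm : m = 3 * nh)
    (C : ZMod m → Finset (ZMod m))
    (hC : ∀ j : ZMod m, (C j).card = 3)
    (hocc : ∀ a : ZMod m, Set.ncard {j : ZMod m | a ∈ C j} = 3)
    (hcover : ∃ S : Set (ZMod m), IsExactCover m nh C S) :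
    ∃ V : Fin 2 → (Fin 2 → X3CStrat m C) → ℝ,
      (∀ i σ, 0 ≤ V i σ) ∧
      UndomProfiles (fun i σ => xGame m C i σ + V i σ) ⊆
        rectSet (fun _ : Fin 2 => xDesired m C) ∧
      gameCost (xGame m C) V = 0 :=
  let ⟨S, hS⟩ := hcover
  x3c_game_forward_general m C ⟨S, hS.existsUnique_mem hm hC⟩
end

section
/- Consider the two-player game G constructed from an Exact Cover by 3-Sets instance (n̂, 𝒜, 𝒞) as described, with desired sets O_1 = O_2 = {c_j^{a_i} : C_j ∈ 𝒞, a_i ∈ C_j}. If there exists a payment promise 𝒱 such that 𝒳⋆_{G[𝒱]} ⊆ O_1 × O_2 and cost(𝒱) = 0, then (n̂, 𝒜, 𝒞) admits an exact cover; in fact 𝒮 = {C_j ∈ 𝒞 : there exists a_i ∈ 𝒜 with c_j^{a_i} undominated for player 2 in G[𝒱]} is an exact cover. -/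
/-!
Every strategy of a finite game is weakly below an undominated one, and at cost `0` all payments
vanish on undominated profiles. Replacing an element strategy by an undominated strategy above it
therefore yields inequalities between the *original* utilities against undominated opponents.

* For player 2: if some `c_p^{a-1}` is undominated for player 1, then some `c_j^a` is undominated
  for player 2.
* For player 1: there is an undominated `c_j^b` such that every undominated `c_k^d` of player 2
  with `a ∈ C_k` has `k = j`, and moreover `b = a` if `d = a`.

Thus the elements occurring as superscripts of undominated strategies of player 1 form a nonempty
set closed under `a ↦ a + 1`, so every element occurs, and then the same holds for player 2. So the
sets `C_j` in question cover all elements, and by the second item each element lies in exactly one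
of them; double counting gives their number.
-/

section Games

variable {ι : Type*} {S : ι → Type*}

/-- The modified game `G[V]`, in which the payments `V` are added to the utilities `U`. -/
abbrev withPayments (U V : ι → (∀ j, S j) → ℝ) : ι → (∀ j, S j) → ℝ :=
  fun i σ => U i σ + V i σ

variable [DecidableEq ι]

/-- The payoffs of strategy `x` of player `i`, as a function of the opponents' strategies. The
latter are given by a full profile whose `i`-th entry is ignored, as in `Dominates`. -/
def strategyPayoff (U : ι → (∀ j, S j) → ℝ) (i : ι) (x : S i) : (∀ j, S j) → ℝ :=
  fun σ => U i (Function.update σ i x)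

/-- The payment promise `V` is a `0`-implementation of the strategy sets `O`: in the modified
game only strategy profiles in `∏ i, O i` are undominated, and they are not paid for. -/
structure IsZeroImplementation [Fintype ι] (U V : ι → (∀ j, S j) → ℝ) (O : ∀ i, Set (S i)) :
    Prop where
  nonneg : ∀ i σ, 0 ≤ V i σ
  undomProfiles_subset : UndomProfiles (withPayments U V) ⊆ rectSet O
  gameCost_eq_zero : gameCost U V = 0

theorem dominates_iff_strategyPayoff_lt {U : ι → (∀ j, S j) → ℝ} {i : ι} {x y : S i} :
    Dominates U i x y ↔ strategyPayoff U i y < strategyPayoff U i x :=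
  Pi.lt_def.symm

theorem exists_undominated_strategyPayoff_le (U : ι → (∀ j, S j) → ℝ) (i : ι) [Finite (S i)]
    (x : S i) : ∃ y, Undominated U i y ∧ strategyPayoff U i x ≤ strategyPayoff U i y := by
  obtain ⟨_, hxy, hmax⟩ :=
    (Set.finite_range (strategyPayoff U i)).exists_le_maximal (Set.mem_range_self x)
  obtain ⟨y, rfl⟩ := hmax.prop
  exact ⟨y, fun ⟨z, hz⟩ =>
    hmax.not_gt (Set.mem_range_self z) (dominates_iff_strategyPayoff_lt.1 hz), hxy⟩

theorem undomProfiles_nonempty [∀ i, Finite (S i)] [∀ i, Nonempty (S i)]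
    (U : ι → (∀ j, S j) → ℝ) : (UndomProfiles U).Nonempty := by
  choose σ hσ _ using fun i =>
    exists_undominated_strategyPayoff_le U i (Classical.arbitrary (S i))
  exact ⟨σ, hσ⟩

theorem update_mem_undomProfiles {U : ι → (∀ j, S j) → ℝ} {i : ι} {x : S i} {σ : ∀ j, S j}
    (hx : Undominated U i x) (hσ : ∀ j ≠ i, Undominated U j (σ j)) :
    Function.update σ i x ∈ UndomProfiles U :=
  (Function.forall_update_iff σ fun j y => Undominated U j y).2 ⟨hx, hσ⟩

theorem payment_eq_zero [Fintype ι] [∀ i, Finite (S i)] {U V : ι → (∀ j, S j) → ℝ}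
    (hV : ∀ i σ, 0 ≤ V i σ) (hcost : gameCost U V = 0) {σ : ∀ j, S j}
    (hσ : σ ∈ UndomProfiles (withPayments U V)) (i : ι) : V i σ = 0 := by
  refine le_antisymm ?_ (hV i σ)
  calc V i σ ≤ ∑ j, V j σ :=
        Finset.single_le_sum (f := fun j => V j σ) (fun j _ => hV j σ) (Finset.mem_univ i)
    _ ≤ gameCost U V := le_csSup (Set.toFinite _).bddAbove (Set.mem_image_of_mem _ hσ)
    _ = 0 := hcost

namespace IsZeroImplementation

variable [Fintype ι] [∀ i, Finite (S i)] [∀ i, Nonempty (S i)] {U V : ι → (∀ j, S j) → ℝ}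
  {O : ∀ i, Set (S i)}

theorem mem_of_undominated (h : IsZeroImplementation U V O) {i : ι} {x : S i}
    (hx : Undominated (withPayments U V) i x) : x ∈ O i := by
  obtain ⟨σ, hσ⟩ := undomProfiles_nonempty (withPayments U V)
  simpa only [Function.update_self] using
    h.undomProfiles_subset (update_mem_undomProfiles hx fun j _ => hσ j) i

theorem exists_undominated_mem_forall_le (h : IsZeroImplementation U V O) (i : ι) (x : S i) :
    ∃ z ∈ O i, Undominated (withPayments U V) i z ∧
      ∀ σ : ∀ j, S j, (∀ j ≠ i, Undominated (withPayments U V) j (σ j)) →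
        U i (Function.update σ i x) ≤ U i (Function.update σ i z) := by
  obtain ⟨z, hz, hxz⟩ := exists_undominated_strategyPayoff_le (withPayments U V) i x
  refine ⟨z, h.mem_of_undominated hz, hz, fun σ hσ => ?_⟩
  have hpay : V i (Function.update σ i z) = 0 :=
    payment_eq_zero h.nonneg h.gameCost_eq_zero (update_mem_undomProfiles hz hσ) i
  calc U i (Function.update σ i x)
      ≤ U i (Function.update σ i x) + V i (Function.update σ i x) :=
        le_add_of_nonneg_right (h.nonneg i _)
    _ ≤ U i (Function.update σ i z) + V i (Function.update σ i z) := hxz σ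
    _ = U i (Function.update σ i z) := by rw [hpay, add_zero]

end IsZeroImplementation

end Games

theorem zmod_forall_of_add_one {m : ℕ} [NeZero m] {P : ZMod m → Prop} (hP : ∃ a, P a)
    (hstep : ∀ a, P a → P (a + 1)) (b : ZMod m) : P b := by
  obtain ⟨a, ha⟩ := hP
  have hshift : ∀ n : ℕ, P (a + n) := by
    intro n
    induction n with
    | zero => simpa only [Nat.cast_zero, add_zero] using ha
    | succ n ih => simpa only [Nat.cast_succ, add_assoc] using hstep _ ih
  simpa only [ZMod.natCast_zmod_val, add_sub_cancel] using hshift (b - a).val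

theorem card_mul_eq_card_of_existsUnique_mem {ι α : Type*} [Fintype α] {C : ι → Finset α}
    {s : Finset ι} {k : ℕ} (hC : ∀ j ∈ s, (C j).card = k)
    (hs : ∀ a, ∃! j, j ∈ s ∧ a ∈ C j) : s.card * k = Fintype.card α := by
  classical
  have habove : ∀ j ∈ s, (Finset.univ.bipartiteAbove (fun j a => a ∈ C j) j).card = k := by
    intro j hj
    simpa only [Finset.bipartiteAbove, Finset.filter_univ_mem] using hC j hj
  have hbelow : ∀ a ∈ Finset.univ, (s.bipartiteBelow (fun j a => a ∈ C j) a).card = 1 := by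
    intro a _
    simpa only [Finset.card_eq_one, Finset.singleton_iff_unique_mem, Finset.mem_bipartiteBelow]
      using hs a
  simpa only [mul_one, Finset.card_univ] using Finset.card_mul_eq_card_mul _ habove hbelow

theorem isExactCover_of_existsUnique {m k nh : ℕ} [NeZero m] (hm : m = k * nh)
    {C : ZMod m → Finset (ZMod m)} {S : Set (ZMod m)} (hC : ∀ j ∈ S, (C j).card = k)
    (hS : ∀ a, ∃! j, j ∈ S ∧ a ∈ C j) : IsExactCover m nh C S := by
  classical
  refine ⟨?_, fun a => (hS a).exists⟩
  have hk : 0 < k := Nat.pos_of_mul_pos_right (hm ▸ NeZero.pos m)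
  have hcount : S.toFinset.card * k = Fintype.card (ZMod m) :=
    card_mul_eq_card_of_existsUnique_mem (by simpa only [Set.mem_toFinset] using hC)
      (by simpa only [Set.mem_toFinset] using hS)
  rw [ZMod.card] at hcount
  rw [Set.ncard_eq_toFinset_card']
  exact Nat.eq_of_mul_eq_mul_right hk (hcount.trans (hm.trans (mul_comm k nh)))

section X3C

variable {m : ℕ} {C : ZMod m → Finset (ZMod m)}

instance X3CStrat.instFinite [NeZero m] : Finite (X3CStrat m C) :=
  inferInstanceAs (Finite (ZMod m ⊕ {p : ZMod m × ZMod m // p.2 ∈ C p.1}))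

instance X3CStrat.instNonempty : Nonempty (X3CStrat m C) :=
  ⟨Sum.inl 0⟩

/-- The strategy `c_j^a` exists, that is, `a ∈ C_j`, and it is undominated for player `i` in
`G[V]`. Here `i = 0` is player 1 and `i = 1` is player 2, as in `xGame`. -/
def IsUndominatedSetStrat (V : Fin 2 → (Fin 2 → X3CStrat m C) → ℝ) (i : Fin 2) (j a : ZMod m) :
    Prop :=
  ∃ h : a ∈ C j, Undominated (withPayments (xGame m C) V) i (Sum.inr ⟨(j, a), h⟩)

theorem eq_of_xU1_inl_le {a j b k d : ZMod m} {hb : b ∈ C j} {hd : d ∈ C k} (hak : a ∈ C k)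
    (hle : xU1 m C (Sum.inl a) (Sum.inr ⟨(k, d), hd⟩) ≤
      xU1 m C (Sum.inr ⟨(j, b), hb⟩) (Sum.inr ⟨(k, d), hd⟩)) :
    k = j ∧ (d = a → b = a) := by
  simp only [xU1, if_pos hak] at hle
  constructor
  · by_contra hkj
    rw [if_neg hkj] at hle
    split_ifs at hle <;> linarith
  · rintro rfl
    by_contra hbd
    rw [if_pos rfl, if_neg (Ne.symm hbd)] at hle
    split_ifs at hle <;> linarith

theorem eq_of_xU2_inl_le {a p j b : ZMod m} {ha : a ∈ C p} {hb : b ∈ C j}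
    (hle : xU2 m C (Sum.inr ⟨(p, a), ha⟩) (Sum.inl (a + 1)) ≤
      xU2 m C (Sum.inr ⟨(p, a), ha⟩) (Sum.inr ⟨(j, b), hb⟩)) : b = a + 1 := by
  by_contra hba
  have hab : a ≠ b - 1 := fun hab => hba (sub_eq_iff_eq_add.1 hab.symm)
  simp only [xU2, add_sub_cancel_right, if_true, if_neg hab] at hle
  linarith

namespace IsZeroImplementation

variable [NeZero m] {V : Fin 2 → (Fin 2 → X3CStrat m C) → ℝ}

theorem exists_isUndominatedSetStrat_zero_forall
    (h : IsZeroImplementation (xGame m C) V fun _ => xDesired m C) (a : ZMod m) :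
    ∃ j b, IsUndominatedSetStrat V 0 j b ∧
      ∀ k d, IsUndominatedSetStrat V 1 k d → a ∈ C k → k = j ∧ (d = a → b = a) := by
  obtain ⟨_, ⟨⟨⟨j, b⟩, hb⟩, rfl⟩, hz, hle⟩ := h.exists_undominated_mem_forall_le 0 (Sum.inl a)
  refine ⟨j, b, ⟨hb, hz⟩, fun k d ⟨hd, hy⟩ hak => ?_⟩
  exact eq_of_xU1_inl_le hak <| hle (fun _ => Sum.inr ⟨(k, d), hd⟩) <|
    Fin.forall_fin_two.2 ⟨fun h0 => (h0 rfl).elim, fun _ => hy⟩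

theorem exists_isUndominatedSetStrat_one_add_one
    (h : IsZeroImplementation (xGame m C) V fun _ => xDesired m C) {p a : ZMod m}
    (hp : IsUndominatedSetStrat V 0 p a) : ∃ j, IsUndominatedSetStrat V 1 j (a + 1) := by
  obtain ⟨ha, hx⟩ := hp
  obtain ⟨_, ⟨⟨⟨j, b⟩, hb⟩, rfl⟩, hz, hle⟩ :=
    h.exists_undominated_mem_forall_le 1 (Sum.inl (a + 1))
  obtain rfl : b = a + 1 := eq_of_xU2_inl_le <| hle (fun _ => Sum.inr ⟨(p, a), ha⟩) <|
    Fin.forall_fin_two.2 ⟨fun _ => hx, fun h1 => (h1 rfl).elim⟩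
  exact ⟨j, hb, hz⟩

theorem exists_isUndominatedSetStrat_zero
    (h : IsZeroImplementation (xGame m C) V fun _ => xDesired m C) (a : ZMod m) :
    ∃ p, IsUndominatedSetStrat V 0 p a := by
  refine zmod_forall_of_add_one (P := fun a => ∃ p, IsUndominatedSetStrat V 0 p a) ?_ ?_ a
  · obtain ⟨p, b, hp, -⟩ := h.exists_isUndominatedSetStrat_zero_forall 0
    exact ⟨b, p, hp⟩
  · rintro a ⟨p, hp⟩
    obtain ⟨k, hk⟩ := h.exists_isUndominatedSetStrat_one_add_one hp
    obtain ⟨j, b, hj, hbest⟩ := h.exists_isUndominatedSetStrat_zero_forall (a + 1)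
    obtain rfl : b = a + 1 := (hbest k _ hk hk.1).2 rfl
    exact ⟨j, hj⟩

theorem exists_isUndominatedSetStrat_one
    (h : IsZeroImplementation (xGame m C) V fun _ => xDesired m C) (a : ZMod m) :
    ∃ j, IsUndominatedSetStrat V 1 j a := by
  obtain ⟨p, hp⟩ := h.exists_isUndominatedSetStrat_zero (a - 1)
  simpa only [sub_add_cancel] using h.exists_isUndominatedSetStrat_one_add_one hp

theorem existsUnique_isUndominatedSetStrat_one_mem
    (h : IsZeroImplementation (xGame m C) V fun _ => xDesired m C) (a : ZMod m) :
    ∃! j, (∃ b, IsUndominatedSetStrat V 1 j b) ∧ a ∈ C j := by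
  obtain ⟨k, hk⟩ := h.exists_isUndominatedSetStrat_one a
  obtain ⟨j, _, -, hbest⟩ := h.exists_isUndominatedSetStrat_zero_forall a
  refine ⟨k, ⟨⟨a, hk⟩, hk.1⟩, ?_⟩
  rintro l ⟨⟨d, hl⟩, hal⟩
  exact (hbest l d hl hal).1.trans (hbest k a hk hk.1).1.symm

end IsZeroImplementation

end X3C

theorem x3c_game_backward_general {m k nh : ℕ} [NeZero m] (hm : m = k * nh)
    {C : ZMod m → Finset (ZMod m)} (hC : ∀ j, (C j).card = k)
    {V : Fin 2 → (Fin 2 → X3CStrat m C) → ℝ}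
    (h : IsZeroImplementation (xGame m C) V fun _ => xDesired m C) :
    IsExactCover m nh C {j | ∃ b, IsUndominatedSetStrat V 1 j b} :=
  isExactCover_of_existsUnique hm (fun j _ => hC j) h.existsUnique_isUndominatedSetStrat_one_mem

/-- if some payment promise implements `O_1 × O_2` at cost 0 in the
constructed two-player game, then the X3C instance admits an exact cover; in fact,
the collection of sets `C_j` having some strategy `c_j^{a_i}` undominated for
player 2 in `G[𝒱]` is an exact cover. -/
theorem x3c_game_backward (m nh : ℕ) [NeZero m] (hm : m = 3 * nh)
    (C : ZMod m → Finset (ZMod m))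
    (hC : ∀ j : ZMod m, (C j).card = 3)
    (hocc : ∀ a : ZMod m, Set.ncard {j : ZMod m | a ∈ C j} = 3)
    (V : Fin 2 → (Fin 2 → X3CStrat m C) → ℝ)
    (hV : ∀ i σ, 0 ≤ V i σ)
    (himpl : UndomProfiles (fun i σ => xGame m C i σ + V i σ) ⊆
      rectSet (fun _ : Fin 2 => xDesired m C))
    (hcost : gameCost (xGame m C) V = 0) :
    IsExactCover m nh C
      {j : ZMod m | ∃ b : ZMod m, ∃ h : b ∈ C j,
        Undominated (fun i σ => xGame m C i σ + V i σ) (1 : Fin 2)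
          (Sum.inr ⟨(j, b), h⟩)} :=
  x3c_game_backward_general hm hC ⟨hV, himpl, hcost⟩
end

section
/- Consider the two-player game G constructed from a finite simple graph H as described, with desired sets O_1 = O_2 = C (the color-choice strategies). If H admits a proper 3-coloring, then there exists a payment promise 𝒱 such that 𝒳⋆_{G[𝒱]} = O_1 × O_2 and cost(𝒱) ≤ 1, i.e., 𝒱 implements O_1 × O_2 exactly with cost at most 1. -/
/-- The common strategy set of both players: a vertex strategy (left), a color-choice
strategy `(v, c)` (middle), or the dummy strategy `d_{(v,c)}` (right); the bijection
from color-choice strategies to dummy strategies is the identity on `V × Fin 3`. -/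
abbrev ColStrat (V : Type*) : Type _ := V ⊕ ((V × Fin 3) ⊕ (V × Fin 3))

/-- Utility of player 1 in the 3-coloring game (first argument is player 1's strategy;
all unspecified values are 0):
`U_1((v,c₁),(v,c₂)) = 3` if `c₁ = c₂` and `2` otherwise; for adjacent `u, v`:
`U_1((u,c₁),(v,c₂)) = 1` if `c₁ = c₂` and `2` otherwise; `U_1(v,(v,c)) = 3`;
`U_1(v,(u,c)) = 2` for `u` adjacent to `v`; `U_1(x, d_x) = 1` for color-choice `x`. -/
def colU1 {V : Type*} [DecidableEq V] (H : SimpleGraph V) [DecidableRel H.Adj] :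
    ColStrat V → ColStrat V → ℝ
  | Sum.inr (Sum.inl (v, c1)), Sum.inr (Sum.inl (w, c2)) =>
      if w = v then (if c2 = c1 then 3 else 2)
      else if H.Adj v w then (if c2 = c1 then 1 else 2) else 0
  | Sum.inl v, Sum.inr (Sum.inl (w, _)) =>
      if w = v then 3 else if H.Adj v w then 2 else 0
  | Sum.inr (Sum.inl x), Sum.inr (Sum.inr y) => if y = x then 1 else 0
  | _, _ => 0

/-- The symmetric two-player game built from the graph `H`. -/
def colGame {V : Type*} [DecidableEq V] (H : SimpleGraph V) [DecidableRel H.Adj] :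
    Fin 2 → (Fin 2 → ColStrat V) → ℝ :=
  fun i σ => if i = 0 then colU1 H (σ 0) (σ 1) else colU1 H (σ 1) (σ 0)

/-- The desired strategy set `O_1 = O_2 = C`, the set of color-choice strategies. -/
def colDesired (V : Type*) : Set (ColStrat V) :=
  {s | ∃ p : V × Fin 3, s = Sum.inr (Sum.inl p)}

/-!
Fix a proper coloring `φ` and pay a player `1` exactly when they play a color choice `(v, φ v)`
against a color choice `(w, c)` with `c ≠ φ w`. The two players are never both paid, so the cost is
at most `1`. The color choices survive because `x` is the only strategy that earns anything against
the dummy `d_x`. Dummies always earn `0`, so any color choice dominates them. A vertex strategy `v`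
is dominated by `(v, φ v)`: without payments the latter earns less only against `(v, c)` with
`c ≠ φ v` and against `(w, φ v)` with `w` adjacent to `v`. It falls short by `1` in both cases, and
both are paid, the second because `φ w ≠ φ v`.
-/

section Games

/-- The symmetric two-player game in which a player using `x` against `y` earns `u x y`.
The opponent of player `i : Fin 2` is `i.rev`. -/
def symmGame {A : Type*} (u : A → A → ℝ) : Fin 2 → (Fin 2 → A) → ℝ :=
  fun i σ => u (σ i) (σ i.rev)

theorem dominates_symmGame_iff {A : Type*} {u : A → A → ℝ} {i : Fin 2} {x y : A} :
    Dominates (symmGame u) i x y ↔ u y < u x := by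
  have rev_ne : i.rev ≠ i := by fin_cases i <;> decide
  simp only [Dominates, symmGame, Function.update_self, Function.update_of_ne rev_ne, Pi.lt_def,
    Pi.le_def]
  have eval_surjective : Function.Surjective fun σ : Fin 2 → A => σ i.rev :=
    fun z => ⟨fun _ => z, rfl⟩
  exact and_congr (eval_surjective.forall (p := fun z => u y z ≤ u x z)).symm
    (eval_surjective.exists (p := fun z => u y z < u x z)).symm

theorem undomProfiles_symmGame {A : Type*} (u : A → A → ℝ) :
    UndomProfiles (symmGame u) = rectSet fun _ => {x | ∀ y, ¬ u x < u y} := by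
  simp only [UndomProfiles, rectSet, Undominated, dominates_symmGame_iff, not_exists,
    Set.mem_ofPred_eq]

theorem not_lt_of_unique_bestResponse {A B R : Type*} [Preorder R] {u : A → B → R} {x : A} {z : B}
    (hx : ∀ y, y ≠ x → u y z < u x z) (y : A) : ¬ u x < u y := by
  intro hlt
  have hne : y ≠ x := fun h => (h ▸ hlt).false
  exact (hx y hne).not_ge (hlt.le z)

theorem gameCost_le {ι : Type*} [DecidableEq ι] [Fintype ι] {S : ι → Type*}
    {U W : ι → (∀ j, S j) → ℝ} {c : ℝ} (hc : 0 ≤ c)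
    (hW : ∀ σ ∈ UndomProfiles (fun i σ => U i σ + W i σ), ∑ i, W i σ ≤ c) :
    gameCost U W ≤ c :=
  Real.sSup_le (Set.forall_mem_image.2 hW) hc

end Games

namespace ColStrat

variable {V : Type*}

/-- The vertex strategy `v`. -/
abbrev vertex (v : V) : ColStrat V := Sum.inl v

/-- The color-choice strategy `p = (v, c)`. -/
abbrev color (p : V × Fin 3) : ColStrat V := Sum.inr (Sum.inl p)

/-- The dummy strategy `d_p` of the color choice `p`. -/
abbrev dummy (p : V × Fin 3) : ColStrat V := Sum.inr (Sum.inr p)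

end ColStrat

open ColStrat

section Payments

variable {V : Type*} (φ : V → Fin 3)

/-- The payment promised to a player for using the first strategy against the second: `1` if both
are color choices, of which the first follows the coloring `φ` and the second does not. -/
def colPay : ColStrat V → ColStrat V → ℝ
  | Sum.inr (Sum.inl (v, c)), Sum.inr (Sum.inl (w, d)) => if c = φ v ∧ d ≠ φ w then 1 else 0
  | _, _ => 0

theorem colPay_nonneg (x y : ColStrat V) : 0 ≤ colPay φ x y := by
  unfold colPay
  split
  · positivity
  · exact le_rfl

theorem colPay_add_colPay_swap_le_one (x y : ColStrat V) :
    colPay φ x y + colPay φ y x ≤ 1 := by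
  rcases x with v | ⟨v, c⟩ | p <;> rcases y with w | ⟨w, d⟩ | q <;> simp only [colPay] <;> grind

end Payments

section ColoringGame

variable {V : Type*} [DecidableEq V] (H : SimpleGraph V) [DecidableRel H.Adj]

theorem colGame_eq_symmGame : colGame H = symmGame (colU1 H) := by
  funext i σ
  fin_cases i <;> rfl

theorem colU1_nonneg (x y : ColStrat V) : 0 ≤ colU1 H x y := by
  unfold colU1
  split <;> positivity

/-- The utility of a player in the coloring game including the payment `colPay φ`. -/
def paidU (φ : V → Fin 3) : ColStrat V → ColStrat V → ℝ :=
  colU1 H + colPay φ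

theorem paidU_nonneg (φ : V → Fin 3) (x y : ColStrat V) : 0 ≤ paidU H φ x y :=
  add_nonneg (colU1_nonneg H x y) (colPay_nonneg φ x y)

theorem paidU_dummy (φ : V → Fin 3) (p : V × Fin 3) : paidU H φ (dummy p) = 0 := by
  funext y
  simp [paidU, colU1, colPay]

theorem paidU_apply_dummy (φ : V → Fin 3) (x : ColStrat V) (p : V × Fin 3) :
    paidU H φ x (dummy p) = if x = color p then 1 else 0 := by
  rcases x with v | q | q <;> simp [paidU, colU1, colPay, eq_comm]

theorem paidU_lt_paidU_color {φ : V → Fin 3} {x : ColStrat V} {p : V × Fin 3} (hx : x ≠ color p)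
    (hle : paidU H φ x ≤ paidU H φ (color p)) : paidU H φ x < paidU H φ (color p) :=
  Pi.lt_def.2 ⟨hle, dummy p, by simp [paidU_apply_dummy, hx]⟩

theorem paidU_dummy_lt_paidU_color (φ : V → Fin 3) (q p : V × Fin 3) :
    paidU H φ (dummy q) < paidU H φ (color p) := by
  refine paidU_lt_paidU_color H (by simp) ?_
  rw [paidU_dummy]
  exact paidU_nonneg H φ (color p)

theorem not_paidU_color_lt (φ : V → Fin 3) (p : V × Fin 3) (y : ColStrat V) :
    ¬ paidU H φ (color p) < paidU H φ y :=
  not_lt_of_unique_bestResponse (z := dummy p)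
    (fun y hy => by simp [paidU_apply_dummy, hy]) y

variable {H}

theorem paidU_vertex_apply_color_le (φ : H.Coloring (Fin 3)) (v w : V) (d : Fin 3) :
    paidU H φ (vertex v) (color (w, d)) ≤ paidU H φ (color (v, φ v)) (color (w, d)) := by
  simp only [paidU, Pi.add_apply, colU1, colPay, true_and, add_zero]
  rcases eq_or_ne w v with rfl | hwv
  · by_cases hd : d = φ w <;> norm_num [hd]
  by_cases hadj : H.Adj v w
  · have hφ : φ v ≠ φ w := φ.valid hadj
    by_cases hd : d = φ v
    · norm_num [hwv, hadj, hd, hφ]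
    · simp only [hwv, hadj, hd, if_true, if_false]
      exact le_add_of_nonneg_right (by positivity)
  · simp only [hwv, hadj, if_false, zero_add]
    positivity

theorem paidU_vertex_lt_paidU_color (φ : H.Coloring (Fin 3)) (v : V) :
    paidU H φ (vertex v) < paidU H φ (color (v, φ v)) := by
  refine paidU_lt_paidU_color H (by simp) fun y => ?_
  rcases y with w | ⟨w, d⟩ | q
  · simp [paidU, colU1, colPay]
  · exact paidU_vertex_apply_color_le φ v w d
  · rw [paidU_apply_dummy, if_neg (by simp)]
    exact paidU_nonneg H φ _ _

theorem forall_not_paidU_lt_iff_mem_colDesired (φ : H.Coloring (Fin 3)) (x : ColStrat V) :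
    (∀ y, ¬ paidU H φ x < paidU H φ y) ↔ x ∈ colDesired V := by
  rcases x with v | p | p
  · exact iff_of_false (fun h => h _ (paidU_vertex_lt_paidU_color φ v)) (by simp [colDesired])
  · exact iff_of_true (not_paidU_color_lt H φ p) ⟨p, rfl⟩
  · exact iff_of_false (fun h => h _ (paidU_dummy_lt_paidU_color H φ p p)) (by simp [colDesired])

theorem undomProfiles_colGame_add_colPay (φ : H.Coloring (Fin 3)) :
    UndomProfiles (fun i σ => colGame H i σ + symmGame (colPay φ) i σ) =
      rectSet fun _ => colDesired V := by
  calc UndomProfiles (fun i σ => colGame H i σ + symmGame (colPay φ) i σ)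
      = UndomProfiles (symmGame (paidU H φ)) := by rw [colGame_eq_symmGame]; rfl
    _ = rectSet fun _ => {x | ∀ y, ¬ paidU H φ x < paidU H φ y} := undomProfiles_symmGame _
    _ = rectSet fun _ => colDesired V := by
      simp only [forall_not_paidU_lt_iff_mem_colDesired, Set.ofPred_mem_eq]

theorem gameCost_colGame_colPay_le_one (φ : V → Fin 3) :
    gameCost (colGame H) (symmGame (colPay φ)) ≤ 1 := by
  refine gameCost_le zero_le_one fun σ _ => ?_
  rw [Fin.sum_univ_two]
  exact colPay_add_colPay_swap_le_one φ (σ 0) (σ 1)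

end ColoringGame

theorem coloring_game_forward_general {V : Type*} [DecidableEq V]
    (H : SimpleGraph V) [DecidableRel H.Adj] (hcol : H.Colorable 3) :
    ∃ W : Fin 2 → (Fin 2 → ColStrat V) → ℝ,
      (∀ i σ, 0 ≤ W i σ) ∧
      UndomProfiles (fun i σ => colGame H i σ + W i σ) =
        rectSet (fun _ : Fin 2 => colDesired V) ∧
      gameCost (colGame H) W ≤ 1 := by
  obtain ⟨φ⟩ := hcol
  exact ⟨symmGame (colPay φ), fun i σ => colPay_nonneg φ (σ i) (σ i.rev),
    undomProfiles_colGame_add_colPay φ, gameCost_colGame_colPay_le_one φ⟩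

/-- if `H` admits a proper 3-coloring, then the constructed two-player
game has a payment promise implementing `O_1 × O_2` exactly with cost at most 1. -/
theorem coloring_game_forward {V : Type*} [Fintype V] [DecidableEq V]
    (H : SimpleGraph V) [DecidableRel H.Adj]
    (hcol : ∃ φ : V → Fin 3, ∀ u w : V, H.Adj u w → φ u ≠ φ w) :
    ∃ W : Fin 2 → (Fin 2 → ColStrat V) → ℝ,
      (∀ i σ, 0 ≤ W i σ) ∧
      UndomProfiles (fun i σ => colGame H i σ + W i σ) =
        rectSet (fun _ : Fin 2 => colDesired V) ∧
      gameCost (colGame H) W ≤ 1 := by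
  obtain ⟨φ, hφ⟩ := hcol
  exact coloring_game_forward_general H ⟨.mk φ (hφ _ _)⟩
end
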